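/- arXiv:1611.07214 — 4 statements merged into one kernel-verified Lean document; each statement's English description precedes it below -/
import Mathlib

section
/- Leaf-Average Node-Sum Interchange (LANSIT) with a general length function: Let T be a rooted tree with no infinite geodesic, no vertex having exactly one successor, nonempty boundary ∂T, length function ℓ, and let P be a fully supported probability measure on ∂T with finite expected length ℓ(P). Let p(·|·) be the associated forward Markov chain and μ_P the node-average measure. If f : T → ℝ satisfies ∑_{x ∈ interior T} μ_P(x)·|Δ_P|f(x) < ∞, then the function v ↦ f(v) is absolutely summable with respect to P on ∂T, and (1/ℓ(P))·∑_{v ∈ ∂T} (f(v) − f(o))·P(v) = ∑_{x ∈ interior T} μ_P(x)·Δ_P f(x). -/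
open scoped BigOperators
open Filter

noncomputable section

/-- The entropy function `φ(t) = t·log₂(1/t)` (which vanishes at `t = 0`). -/
def phi (t : ℝ) : ℝ := t * Real.logb 2 (1 / t)

/-- A rooted tree: a set of finite lists over ℕ containing the empty list (the root)
and closed under taking prefixes. -/
def IsTree (T : Set (List ℕ)) : Prop :=
  ([] : List ℕ) ∈ T ∧ ∀ x ∈ T, ∀ y : List ℕ, y <+: x → y ∈ T

/-- The successors of `x` in `T`: one-entry extensions of `x` lying in `T`. -/
def succs (T : Set (List ℕ)) (x : List ℕ) : Set (List ℕ) :=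
  {y | y ∈ T ∧ ∃ n : ℕ, y = x ++ [n]}

/-- `x` is a leaf of `T`. -/
def IsLeaf (T : Set (List ℕ)) (x : List ℕ) : Prop :=
  x ∈ T ∧ succs T x = ∅

/-- The boundary of `T`: its set of leaves. -/
def bdry (T : Set (List ℕ)) : Set (List ℕ) := {x | IsLeaf T x}

/-- The interior of `T`. -/
def intr (T : Set (List ℕ)) : Set (List ℕ) := T \ bdry T

/-- No vertex has exactly one successor. -/
def NoUnary (T : Set (List ℕ)) : Prop :=
  ∀ x ∈ T, ∀ y : List ℕ, succs T x ≠ {y}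

/-- `T` has no infinite geodesic. -/
def NoInfGeo (T : Set (List ℕ)) : Prop :=
  ¬ ∃ ξ : ℕ → ℕ, ∀ n : ℕ, (List.ofFn fun i : Fin n => ξ i) ∈ T

/-- `∂T_x`: the set of leaves having `x` as a prefix. -/
def cone (T : Set (List ℕ)) (x : List ℕ) : Set (List ℕ) :=
  {v | v ∈ bdry T ∧ x <+: v}

/-- `P(∂T_x)`. -/
def mass (T : Set (List ℕ)) (P : List ℕ → ℝ) (x : List ℕ) : ℝ :=
  ∑' v : cone T x, P v

/-- `|x|_ℓ`: the sum of `ℓ(y)` over the proper prefixes `y` of `x`. -/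
def lenWt (ℓ : List ℕ → ℝ) (x : List ℕ) : ℝ :=
  ∑ i ∈ Finset.range x.length, ℓ (x.take i)

/-- Expected length `ℓ(P)`. -/
def expLen (T : Set (List ℕ)) (ℓ P : List ℕ → ℝ) : ℝ :=
  ∑' v : bdry T, lenWt ℓ v * P v

/-- Forward transition probability `p(y|x) = P(∂T_y)/P(∂T_x)`. -/
def fwd (T : Set (List ℕ)) (P : List ℕ → ℝ) (x y : List ℕ) : ℝ :=
  mass T P y / mass T P x

/-- Node-average measure `μ_P(x) = ℓ(x)·P(∂T_x)/ℓ(P)`. -/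
def nodeAvg (T : Set (List ℕ)) (ℓ P : List ℕ → ℝ) (x : List ℕ) : ℝ :=
  ℓ x * mass T P x / expLen T ℓ P

/-- A (fully supported) probability measure on a set `S` of vertices. -/
def IsProbOn (S : Set (List ℕ)) (P : List ℕ → ℝ) : Prop :=
  (∀ v ∈ S, 0 < P v) ∧ HasSum (fun v : S => P v) 1

/-- `|Δ_P|f(x) = (1/ℓ(x))·∑_{y∈N(x)} |f(y) − f(x)|·p(y|x)`. -/
def absLap (T : Set (List ℕ)) (ℓ P : List ℕ → ℝ) (f : List ℕ → ℝ) (x : List ℕ) : ℝ :=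
  (1 / ℓ x) * ∑' y : succs T x, |f y - f x| * fwd T P x y

/-- `Δ_P f(x) = (1/ℓ(x))·∑_{y∈N(x)} (f(y) − f(x))·p(y|x)`. -/
def lap (T : Set (List ℕ)) (ℓ P : List ℕ → ℝ) (f : List ℕ → ℝ) (x : List ℕ) : ℝ :=
  (1 / ℓ x) * ∑' y : succs T x, (f y - f x) * fwd T P x y

/-!
Telescoping along the geodesic from the root to a leaf `v` writes `f(v) − f(o)` as the sum of the
increments of `f` over the edges of that geodesic. Hence `∑ (f(v) − f(o))·P(v)` is a sum over pairs
of a leaf and an edge below which it lies. Summing over the leaves first gives each edge `(x, y)`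
the weight `P(∂T_y) = P(∂T_x)·p(y|x)`, and the edges issuing from `x` then add up to
`ℓ(P)·μ_P(x)·Δ_P f(x)`. The hypothesis on `|Δ_P|f` is absolute summability over those pairs, which
is what the exchange needs.
-/

section Paths

variable {T : Set (List ℕ)} {v : List ℕ}

theorem IsTree.take_mem (hT : IsTree T) (hv : v ∈ T) (i : ℕ) : v.take i ∈ T :=
  hT.2 v hv _ (v.take_prefix i)

theorem IsTree.take_succ_mem_succs (hT : IsTree T) (hv : v ∈ T) {i : ℕ} (hi : i < v.length) :
    v.take (i + 1) ∈ succs T (v.take i) :=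
  ⟨hT.take_mem hv _, v[i], by simp⟩

theorem IsTree.take_mem_intr (hT : IsTree T) (hv : v ∈ T) {i : ℕ} (hi : i < v.length) :
    v.take i ∈ intr T :=
  ⟨hT.take_mem hv i, fun hleaf => hleaf.2.le (hT.take_succ_mem_succs hv hi)⟩

/-- The edges `(x, y)` of `T`, oriented away from the root: `x` is interior and `y ∈ N(x)`. -/
abbrev Edge (T : Set (List ℕ)) : Type := Σ x : intr T, succs T x

/-- The sum of the edge weights `w(x, y)` along the geodesic from the root to `v`. -/
def pathSum (w : List ℕ → List ℕ → ℝ) (v : List ℕ) : ℝ :=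
  ∑ i : Fin v.length, w (v.take i) (v.take (i + 1))

theorem pathSum_sub (f : List ℕ → ℝ) (v : List ℕ) :
    pathSum (fun x y => f y - f x) v = f v - f [] := by
  rw [pathSum, Fin.sum_univ_eq_sum_range (fun i => f (v.take (i + 1)) - f (v.take i)),
    Finset.sum_range_sub (fun i => f (v.take i)), List.take_length, List.take_zero]

theorem edgeLeaf_ext {p q : Σ e : Edge T, cone T e.2} (hx : (p.1.1 : List ℕ) = q.1.1)
    (hy : (p.1.2 : List ℕ) = q.1.2) (hv : (p.2 : List ℕ) = q.2) : p = q := by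
  obtain ⟨⟨⟨x, _⟩, ⟨y, _⟩⟩, ⟨v, _⟩⟩ := p
  obtain ⟨⟨⟨x', _⟩, ⟨y', _⟩⟩, ⟨v', _⟩⟩ := q
  dsimp only at hx hy hv
  subst hx hy hv
  rfl

/-- The pairs of a leaf `v` and an edge on the geodesic from the root to `v`, listed by leaves (the
`i`-th edge joins the prefixes of `v` of lengths `i` and `i + 1`) or by edges `(x, y)` (the edge is
on the geodesic exactly when `v ∈ ∂T_y`). -/
def IsTree.leafEdgeEquiv (hT : IsTree T) :
    (Σ v : bdry T, Fin v.1.length) ≃ Σ e : Edge T, cone T e.2 where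
  toFun p :=
    ⟨⟨⟨p.1.1.take p.2, hT.take_mem_intr p.1.2.1 p.2.2⟩,
      ⟨p.1.1.take (p.2 + 1), hT.take_succ_mem_succs p.1.2.1 p.2.2⟩⟩,
      ⟨p.1, p.1.2, List.take_prefix _ _⟩⟩
  invFun q :=
    ⟨⟨q.2, q.2.2.1⟩, ⟨q.1.1.1.length, by
      obtain ⟨⟨x, ⟨y, -, n, rfl⟩⟩, ⟨v, -, hv⟩⟩ := q
      simpa using hv.length_le⟩⟩
  left_inv := by
    rintro ⟨⟨v, hv⟩, i⟩
    exact Sigma.ext rfl (heq_of_eq (Fin.ext (List.length_take_of_le i.2.le)))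
  right_inv := by
    rintro ⟨⟨⟨x, hx⟩, ⟨y, hy, n, rfl⟩⟩, ⟨v, hv, t, rfl⟩⟩
    exact edgeLeaf_ext (by simp) (by simp [List.take_append]) rfl

end Paths

section Mass

variable {T : Set (List ℕ)} {P : List ℕ → ℝ}

theorem cone_subset_bdry (T : Set (List ℕ)) (x : List ℕ) : cone T x ⊆ bdry T :=
  fun _ hv => hv.1

theorem cone_anti {x y : List ℕ} (h : x <+: y) : cone T y ⊆ cone T x :=
  fun _ hv => ⟨hv.1, h.trans hv.2⟩

theorem summable_cone (hP : Summable fun v : bdry T => P v) (x : List ℕ) :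
    Summable fun v : cone T x => P v :=
  hP.comp_injective (Set.inclusion_injective (cone_subset_bdry T x))

theorem mass_nonneg (hP₀ : ∀ v ∈ bdry T, 0 ≤ P v) (x : List ℕ) : 0 ≤ mass T P x :=
  tsum_nonneg fun v => hP₀ _ v.2.1

theorem mass_anti (hP₀ : ∀ v ∈ bdry T, 0 ≤ P v) (hP : Summable fun v : bdry T => P v)
    {x y : List ℕ} (h : x <+: y) : mass T P y ≤ mass T P x :=
  (summable_cone hP y).tsum_le_tsum_of_inj (Set.inclusion (cone_anti h))
    (Set.inclusion_injective _) (fun v _ => hP₀ _ v.2.1) (fun _ => le_rfl) (summable_cone hP x)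

/-- At `P(∂T_x) = 0`, where `fwd` is `0 / 0 = 0`, this holds because then `P(∂T_y) = 0` as well. -/
theorem mass_mul_fwd (hP₀ : ∀ v ∈ bdry T, 0 ≤ P v) (hP : Summable fun v : bdry T => P v)
    {x y : List ℕ} (h : x <+: y) : mass T P x * fwd T P x y = mass T P y :=
  mul_div_cancel_of_imp' fun hx => (hx ▸ mass_anti hP₀ hP h).antisymm (mass_nonneg hP₀ y)

theorem prefix_of_mem_succs {x y : List ℕ} (hy : y ∈ succs T x) : x <+: y := by
  obtain ⟨-, n, rfl⟩ := hy
  exact x.prefix_append [n]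

theorem ne_nil_of_mem_succs {x y : List ℕ} (hy : y ∈ succs T x) : y ≠ [] := by
  obtain ⟨-, n, rfl⟩ := hy
  simp

theorem hasSum_cone_mul_left (hP : Summable fun v : bdry T => P v) (c : ℝ) (x : List ℕ) :
    HasSum (fun v : cone T x => c * P v) (c * mass T P x) :=
  (summable_cone hP x).hasSum.mul_left c

theorem summable_edgeLeaf (hP₀ : ∀ v ∈ bdry T, 0 ≤ P v) (hP : Summable fun v : bdry T => P v)
    {w : Edge T → ℝ} (hw : Summable fun e => |w e| * mass T P e.2) :
    Summable fun q : Σ e : Edge T, cone T e.2 => w q.1 * P q.2 := by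
  have hcone (e : Edge T) : HasSum (fun v : cone T e.2 => |w e * P v|) (|w e| * mass T P e.2) :=
    (hasSum_cone_mul_left hP |w e| e.2).congr_fun fun v => by
      rw [abs_mul, abs_of_nonneg (hP₀ v v.2.1)]
  refine Summable.of_abs ((summable_sigma_of_nonneg fun q => abs_nonneg _).2 ⟨?_, ?_⟩)
  · exact fun e => (hcone e).summable
  · exact hw.congr fun e => (hcone e).tsum_eq.symm

theorem IsTree.hasSum_pathSum_mul (hT : IsTree T) (hP₀ : ∀ v ∈ bdry T, 0 ≤ P v)
    (hP : Summable fun v : bdry T => P v) {w : List ℕ → List ℕ → ℝ}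
    (hw : Summable fun e : Edge T => |w e.1 e.2| * mass T P e.2) :
    HasSum (fun v : bdry T => pathSum w v * P v)
      (∑' x : intr T, ∑' y : succs T x, w x y * mass T P y) := by
  have hpairs := summable_edgeLeaf hP₀ hP (w := fun e => w e.1 e.2) hw
  have hedges := hpairs.hasSum.sigma fun e => hasSum_cone_mul_left hP (w e.1 e.2) e.2
  rw [← hedges.summable.tsum_sigma, hedges.tsum_eq]
  refine (hT.leafEdgeEquiv.hasSum_iff.2 hpairs.hasSum).sigma fun v => ?_
  rw [pathSum, Finset.sum_mul]
  exact hasSum_fintype _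

end Mass

section Length

variable {T : Set (List ℕ)} {ℓ P : List ℕ → ℝ}

theorem IsTree.lenWt_nonneg (hT : IsTree T) (hℓ : ∀ x ∈ intr T, 0 ≤ ℓ x) {v : List ℕ}
    (hv : v ∈ T) : 0 ≤ lenWt ℓ v :=
  Finset.sum_nonneg fun _ hi => hℓ _ (hT.take_mem_intr hv (Finset.mem_range.1 hi))

theorem IsTree.lenWt_pos (hT : IsTree T) (hℓ : ∀ x ∈ intr T, 0 < ℓ x) {v : List ℕ}
    (hv : v ∈ T) (hne : v ≠ []) : 0 < lenWt ℓ v :=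
  Finset.sum_pos (fun _ hi => hℓ _ (hT.take_mem_intr hv (Finset.mem_range.1 hi)))
    (by simpa using hne)

theorem IsTree.mass_eq_zero_of_expLen_eq_zero (hT : IsTree T) (hℓ : ∀ x ∈ intr T, 0 < ℓ x)
    (hP₀ : ∀ v ∈ bdry T, 0 ≤ P v) (hlen : Summable fun v : bdry T => lenWt ℓ v * P v)
    (hL : expLen T ℓ P = 0) {y : List ℕ} (hy : y ≠ []) : mass T P y = 0 := by
  have htotal : HasSum (fun v : bdry T => lenWt ℓ v * P v) 0 := hL ▸ hlen.hasSum
  have hterm : (fun v : bdry T => lenWt ℓ v * P v) = 0 :=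
    (hasSum_zero_iff_of_nonneg fun v : bdry T =>
      mul_nonneg (hT.lenWt_nonneg (fun x hx => (hℓ x hx).le) v.2.1) (hP₀ v v.2)).1 htotal
  have hzero (v : cone T y) : P v = 0 := by
    have hv : v.1 ≠ [] := fun h => hy (List.prefix_nil.1 (h ▸ v.2.2))
    exact (mul_eq_zero.1 (congrFun hterm ⟨v, v.2.1⟩)).resolve_left
      (hT.lenWt_pos hℓ v.2.1.1 hv).ne'
  simp [mass, hzero]

theorem nodeAvg_mul_tsum_fwd (hP₀ : ∀ v ∈ bdry T, 0 ≤ P v)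
    (hP : Summable fun v : bdry T => P v) {x : List ℕ} (hx : ℓ x ≠ 0) (w : succs T x → ℝ) :
    nodeAvg T ℓ P x * ((1 / ℓ x) * ∑' y : succs T x, w y * fwd T P x y)
      = (∑' y : succs T x, w y * mass T P y) / expLen T ℓ P := by
  have hmass : mass T P x * ∑' y : succs T x, w y * fwd T P x y
      = ∑' y : succs T x, w y * mass T P y := by
    rw [← tsum_mul_left]
    exact tsum_congr fun y => by
      rw [← mass_mul_fwd hP₀ hP (prefix_of_mem_succs y.2), mul_left_comm]
  rw [← hmass, nodeAvg]
  field_simp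

theorem IsTree.summable_abs_sub_mul_mass (hT : IsTree T) (hℓ : ∀ x ∈ intr T, 0 < ℓ x)
    (hP₀ : ∀ v ∈ bdry T, 0 ≤ P v) (hP : Summable fun v : bdry T => P v)
    (hlen : Summable fun v : bdry T => lenWt ℓ v * P v) {f : List ℕ → ℝ}
    (habs : ∀ x ∈ intr T, Summable fun y : succs T x => |f y - f x| * fwd T P x y)
    (hsum : Summable fun x : intr T => nodeAvg T ℓ P x * absLap T ℓ P f x) :
    Summable fun e : Edge T => |f e.2 - f e.1| * mass T P e.2 := by
  by_cases hL : expLen T ℓ P = 0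
  · -- Here `nodeAvg` is `0` only through division by zero, but no edge carries mass either.
    have hmass (e : Edge T) : mass T P e.2 = 0 :=
      hT.mass_eq_zero_of_expLen_eq_zero hℓ hP₀ hlen hL (ne_nil_of_mem_succs e.2.2)
    simp only [hmass, mul_zero, summable_zero]
  rw [summable_sigma_of_nonneg fun e => mul_nonneg (abs_nonneg _) (mass_nonneg hP₀ _)]
  refine ⟨fun x => ?_, (hsum.mul_right (expLen T ℓ P)).congr fun x => ?_⟩
  · refine ((habs x x.2).mul_left (mass T P x)).congr fun y => ?_
    rw [← mass_mul_fwd hP₀ hP (prefix_of_mem_succs y.2), mul_left_comm]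
  · rw [absLap, nodeAvg_mul_tsum_fwd hP₀ hP (hℓ x x.2).ne' (fun y => |f y - f x|),
      div_mul_cancel₀ _ hL]

end Length

theorem lansit_general
    (T : Set (List ℕ)) (hT : IsTree T)
    (ℓ : List ℕ → ℝ) (hℓ : ∀ x ∈ intr T, 0 < ℓ x)
    (P : List ℕ → ℝ) (hP₀ : ∀ v ∈ bdry T, 0 ≤ P v) (hP : Summable fun v : bdry T => P v)
    (hlen : Summable fun v : bdry T => lenWt ℓ v * P v)
    (f : List ℕ → ℝ)
    (habs : ∀ x ∈ intr T, Summable fun y : succs T x => |f y - f x| * fwd T P x y)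
    (hsum : Summable fun x : intr T => nodeAvg T ℓ P x * absLap T ℓ P f x) :
    (Summable fun v : bdry T => f v * P v) ∧
    (1 / expLen T ℓ P) * (∑' v : bdry T, (f v - f ([] : List ℕ)) * P v)
      = ∑' x : intr T, nodeAvg T ℓ P x * lap T ℓ P f x := by
  have hedges := hT.summable_abs_sub_mul_mass hℓ hP₀ hP hlen habs hsum
  have hleaves : HasSum (fun v : bdry T => (f v - f []) * P v)
      (∑' x : intr T, ∑' y : succs T x, (f y - f x) * mass T P y) := by
    simpa only [pathSum_sub] using
      hT.hasSum_pathSum_mul hP₀ hP (w := fun x y => f y - f x) hedges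
  have hnode (x : intr T) : nodeAvg T ℓ P x * lap T ℓ P f x
      = (∑' y : succs T x, (f y - f x) * mass T P y) / expLen T ℓ P :=
    nodeAvg_mul_tsum_fwd hP₀ hP (hℓ x x.2).ne' fun y => f y - f x
  constructor
  · exact (hleaves.summable.add (hP.mul_left (f []))).congr fun v => by ring
  · rw [hleaves.tsum_eq, tsum_congr hnode, tsum_div_const, one_div_mul_eq_div]

/-- Leaf-Average Node-Sum Interchange Theorem (LANSIT) with a general length function. -/
theorem lansit
    (T : Set (List ℕ)) (hT : IsTree T) (hU : NoUnary T) (hG : NoInfGeo T)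
    (hB : (bdry T).Nonempty)
    (ℓ : List ℕ → ℝ) (hℓ : ∀ x ∈ intr T, 0 < ℓ x)
    (P : List ℕ → ℝ) (hP : IsProbOn (bdry T) P)
    (hlen : Summable fun v : bdry T => lenWt ℓ v * P v)
    (f : List ℕ → ℝ)
    (habs : ∀ x ∈ intr T, Summable fun y : succs T x => |f y - f x| * fwd T P x y)
    (hsum : Summable fun x : intr T => nodeAvg T ℓ P x * absLap T ℓ P f x) :
    (Summable fun v : bdry T => f v * P v) ∧
    (1 / expLen T ℓ P) * (∑' v : bdry T, (f v - f ([] : List ℕ)) * P v)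
      = ∑' x : intr T, nodeAvg T ℓ P x * lap T ℓ P f x :=
  lansit_general T hT ℓ hℓ P (fun v hv => (hP.1 v hv).le) hP.2.summable hlen f habs hsum
end
end

section
/- Stochastic domination with finite mean implies uniform summability of entropies: Let I be a set and for each i ∈ I let p_i : {1,2,3,…} → ℝ be a probability distribution (p_i(n) ≥ 0, ∑_{n≥1} p_i(n) = 1). Define the tails τ_i(k) = ∑_{n≥k} p_i(n) and τ(k) = sup_{i∈I} τ_i(k). Assume τ(k) → 0 as k → ∞ and that the dominating distribution p(n) = τ(n) − τ(n+1) has finite mean, i.e. ∑_{n≥1} n·p(n) < ∞. Then the entropies of the p_i are uniformly summable: for every ε > 0 there is m ∈ ℕ such that for every i ∈ I, ∑_{n≥m} φ(p_i(n)) < ε, where φ(t) = t·log₂(1/t) with φ(0) = 0. -/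
open Filter

noncomputable section

/-- The tail `τ_i(k) = ∑_{n ≥ k} p_i(n)` of the `i`-th distribution. -/
def tailOf {I : Type*} (p : I → ℕ → ℝ) (i : I) (k : ℕ) : ℝ :=
  ∑' n : ℕ, p i (k + n)

/-- `τ(k) = sup_i τ_i(k)`. -/
def tailSup {I : Type*} (p : I → ℕ → ℝ) (k : ℕ) : ℝ :=
  ⨆ i, tailOf p i k

/-! For every real `w`, `-t log t ≤ w t + exp (-w)`; taking `w = a + n` at the `n`-th term bounds
the entropy of a sequence by `a` times its mass plus its mean plus a multiple of `exp (-a)`. For the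
part of `p i` beyond `m`, summation by parts turns the mean into a sum of tails, so domination by a
summable sequence `T` makes the mass at most `T m` and the mean at most `∑_{k > m} T k`. One chooses
`a` first and then `m`. The finite mean hypothesis, again by summation by parts, says that `τ` is
summable. -/

lemma phi_eq_negMulLog_div (t : ℝ) : phi t = Real.negMulLog t / Real.log 2 := by
  rw [phi, Real.logb, one_div, Real.log_inv, Real.negMulLog]
  ring

lemma negMulLog_le_mul_add_exp_neg {t : ℝ} (ht : 0 ≤ t) (w : ℝ) :
    Real.negMulLog t ≤ w * t + Real.exp (-w) := by
  have hscaled := Real.negMulLog_le_one_sub_self (mul_nonneg ht (Real.exp_pos w).le)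
  have hexpand : Real.negMulLog (t * Real.exp w) =
      Real.exp w * (Real.negMulLog t - w * t) := by
    rw [Real.negMulLog_mul, Real.negMulLog, Real.negMulLog, Real.log_exp]
    ring
  have hle : Real.negMulLog t - w * t ≤ Real.exp (-w) - t :=
    calc Real.negMulLog t - w * t
        = Real.exp (-w) * Real.negMulLog (t * Real.exp w) := by
          rw [hexpand, ← mul_assoc, ← Real.exp_add, neg_add_cancel, Real.exp_zero, one_mul]
      _ ≤ Real.exp (-w) * (1 - t * Real.exp w) := by gcongr
      _ = Real.exp (-w) - t := by
          rw [mul_sub, mul_one, mul_left_comm, ← Real.exp_add, neg_add_cancel, Real.exp_zero,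
            mul_one]
  linarith

section Entropy

variable {ι : Type*} {q w : ι → ℝ}

lemma summable_negMulLog (hq : ∀ x, 0 ≤ q x) (hqs : Summable q)
    (hwq : Summable fun x => w x * q x) (hw : Summable fun x => Real.exp (-w x)) :
    Summable fun x => Real.negMulLog (q x) := by
  refine (hwq.add hw).of_norm_bounded_eventually ?_
  filter_upwards [hqs.tendsto_cofinite_zero.eventually_le_const one_pos] with x hx
  rw [Real.norm_of_nonneg (Real.negMulLog_nonneg (hq x) hx)]
  exact negMulLog_le_mul_add_exp_neg (hq x) (w x)

lemma tsum_negMulLog_le (hq : ∀ x, 0 ≤ q x) (hqs : Summable q)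
    (hwq : Summable fun x => w x * q x) (hw : Summable fun x => Real.exp (-w x)) :
    ∑' x, Real.negMulLog (q x) ≤ ∑' x, w x * q x + ∑' x, Real.exp (-w x) := by
  rw [← hwq.tsum_add hw]
  exact (summable_negMulLog hq hqs hwq hw).tsum_le_tsum
    (fun x => negMulLog_le_mul_add_exp_neg (hq x) (w x)) (hwq.add hw)

end Entropy

section Mean

variable {q : ℕ → ℝ}

lemma summable_phi_of_summable_mul (hq : ∀ n, 0 ≤ q n) (hqs : Summable q)
    (hmean : Summable fun n : ℕ => n * q n) : Summable fun n => phi (q n) := by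
  simp only [phi_eq_negMulLog_div]
  exact (summable_negMulLog hq hqs hmean Real.summable_exp_neg_nat).div_const _

lemma tsum_phi_le (hq : ∀ n, 0 ≤ q n) (hqs : Summable q)
    (hmean : Summable fun n : ℕ => n * q n) (a : ℝ) :
    ∑' n, phi (q n) ≤
      (a * ∑' n, q n + ∑' n : ℕ, n * q n + Real.exp (-a) * ∑' n : ℕ, Real.exp (-n)) /
        Real.log 2 := by
  have hweight (n : ℕ) : (a + n) * q n = a * q n + n * q n := add_mul _ _ _
  have hexp (n : ℕ) : Real.exp (-(a + n)) = Real.exp (-a) * Real.exp (-n) := by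
    rw [neg_add, Real.exp_add]
  have hbound := tsum_negMulLog_le (w := fun n : ℕ => a + n) hq hqs
    (by simpa only [hweight] using (hqs.mul_left a).add hmean)
    (by simpa only [hexp] using Real.summable_exp_neg_nat.mul_left _)
  simp only [hweight, hexp, (hqs.mul_left a).tsum_add hmean, tsum_mul_left] at hbound
  simp only [phi_eq_negMulLog_div, tsum_div_const]
  gcongr

end Mean

section SummationByParts

lemma sum_range_mul_sub_succ (f : ℕ → ℝ) (N : ℕ) :
    ∑ j ∈ Finset.range N, j * (f j - f (j + 1)) = ∑ j ∈ Finset.range N, (f (j + 1) - f N) := by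
  induction N with
  | zero => simp
  | succ N ih =>
    simp only [Finset.sum_range_succ, ih, Finset.sum_sub_distrib, Finset.sum_const,
      Finset.card_range, nsmul_eq_mul]
    push_cast
    ring

lemma summable_of_summable_mul_sub_succ {f : ℕ → ℝ} (hf : Antitone f)
    (hlim : Tendsto f atTop (nhds 0)) (hmean : Summable fun n : ℕ => n * (f n - f (n + 1))) :
    Summable f := by
  refine (summable_nat_add_iff 1).1 <|
    summable_of_sum_range_le (fun n => hf.le_of_tendsto hlim (n + 1))
      (c := ∑' n : ℕ, n * (f n - f (n + 1))) fun n => ?_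
  have hpartial : Tendsto (fun N => ∑ j ∈ Finset.range n, (f (j + 1) - f N)) atTop
      (nhds (∑ j ∈ Finset.range n, f (j + 1))) := by
    simpa using tendsto_finsetSum (Finset.range n) fun j _ => hlim.const_sub (f (j + 1))
  refine le_of_tendsto hpartial ?_
  filter_upwards [eventually_ge_atTop n] with N hN
  calc ∑ j ∈ Finset.range n, (f (j + 1) - f N)
      ≤ ∑ j ∈ Finset.range N, (f (j + 1) - f N) :=
        Finset.sum_le_sum_of_subset_of_nonneg (Finset.range_mono hN) fun j hj _ =>
          sub_nonneg.2 (hf (Finset.mem_range.1 hj))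
    _ = ∑ j ∈ Finset.range N, j * (f j - f (j + 1)) := (sum_range_mul_sub_succ f N).symm
    _ ≤ ∑' n : ℕ, n * (f n - f (n + 1)) :=
        hmean.sum_le_tsum _ fun j _ =>
          mul_nonneg j.cast_nonneg (sub_nonneg.2 (hf j.le_succ))

end SummationByParts

section Tails

lemma summable_nat_add_left {q : ℕ → ℝ} (hq : Summable q) (m : ℕ) :
    Summable fun n => q (m + n) :=
  hq.comp_injective (add_right_injective m)

variable {I : Type*} {p : I → ℕ → ℝ} {i : I}

lemma tailOf_nonneg (hpos : ∀ n, 0 ≤ p i n) (k : ℕ) : 0 ≤ tailOf p i k :=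
  tsum_nonneg fun _ => hpos _

lemma tailOf_sub_tailOf_succ (hsum : Summable (p i)) (k : ℕ) :
    tailOf p i k - tailOf p i (k + 1) = p i k := by
  simp only [tailOf, (summable_nat_add_left hsum k).tsum_eq_zero_add, add_zero, add_right_comm k 1,
    ← add_assoc, add_sub_cancel_right]

lemma antitone_tailOf (hpos : ∀ n, 0 ≤ p i n) (hsum : Summable (p i)) : Antitone (tailOf p i) :=
  antitone_nat_of_succ_le fun k => by linarith [tailOf_sub_tailOf_succ hsum k, hpos k]

lemma sum_range_mul_le_sum_range_tailOf (hpos : ∀ n, 0 ≤ p i n) (hsum : Summable (p i))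
    (m N : ℕ) :
    ∑ j ∈ Finset.range N, j * p i (m + j) ≤ ∑ j ∈ Finset.range N, tailOf p i (m + j + 1) :=
  calc ∑ j ∈ Finset.range N, j * p i (m + j)
      = ∑ j ∈ Finset.range N, (tailOf p i (m + j + 1) - tailOf p i (m + N)) := by
        simpa only [← add_assoc, tailOf_sub_tailOf_succ hsum] using
          sum_range_mul_sub_succ (fun j => tailOf p i (m + j)) N
    _ ≤ ∑ j ∈ Finset.range N, tailOf p i (m + j + 1) :=
        Finset.sum_le_sum fun _ _ => sub_le_self _ (tailOf_nonneg hpos _)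

lemma bddAbove_range_tailOf (hpos : ∀ i n, 0 ≤ p i n) (hsum : ∀ i, Summable (p i))
    (hmass : BddAbove (Set.range fun i => tailOf p i 0)) (k : ℕ) :
    BddAbove (Set.range fun i => tailOf p i k) :=
  hmass.range_mono _ fun i => antitone_tailOf (hpos i) (hsum i) k.zero_le

lemma antitone_tailSup (hpos : ∀ i n, 0 ≤ p i n) (hsum : ∀ i, Summable (p i))
    (hmass : BddAbove (Set.range fun i => tailOf p i 0)) : Antitone (tailSup p) :=
  fun k _ hkl => ciSup_mono (bddAbove_range_tailOf hpos hsum hmass k) fun i =>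
    antitone_tailOf (hpos i) (hsum i) hkl

lemma tailOf_le_tailSup (hpos : ∀ i n, 0 ≤ p i n) (hsum : ∀ i, Summable (p i))
    (hmass : BddAbove (Set.range fun i => tailOf p i 0)) (i : I) (k : ℕ) :
    tailOf p i k ≤ tailSup p k :=
  le_ciSup (bddAbove_range_tailOf hpos hsum hmass k) i

end Tails

section Domination

variable {I : Type*} {p : I → ℕ → ℝ} {i : I} {T : ℕ → ℝ}

/-- The upper bound for `∑_{n ≥ m} φ(q(n))`, over sequences `q ≥ 0` with tails at most `T`, that
comes from comparing `q` beyond `m` with the weights `exp (-(a + n))`; `a` is a free parameter. -/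
def entropyBound (T : ℕ → ℝ) (a : ℝ) (m : ℕ) : ℝ :=
  (a * T m + ∑' j, T (j + (m + 1)) + Real.exp (-a) * ∑' n : ℕ, Real.exp (-n)) / Real.log 2

lemma sum_range_mul_le_tsum_of_tailOf_le (hpos : ∀ n, 0 ≤ p i n) (hsum : Summable (p i))
    (hdom : ∀ k, tailOf p i k ≤ T k) (hT : Summable T) (m N : ℕ) :
    ∑ j ∈ Finset.range N, j * p i (m + j) ≤ ∑' j, T (j + (m + 1)) :=
  calc ∑ j ∈ Finset.range N, j * p i (m + j)
      ≤ ∑ j ∈ Finset.range N, tailOf p i (j + (m + 1)) := by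
        simpa only [add_comm m, add_assoc] using sum_range_mul_le_sum_range_tailOf hpos hsum m N
    _ ≤ ∑ j ∈ Finset.range N, T (j + (m + 1)) := Finset.sum_le_sum fun _ _ => hdom _
    _ ≤ ∑' j, T (j + (m + 1)) :=
        ((summable_nat_add_iff (m + 1)).2 hT).sum_le_tsum _ fun k _ =>
          (tailOf_nonneg hpos _).trans (hdom _)

lemma summable_mul_of_tailOf_le (hpos : ∀ n, 0 ≤ p i n) (hsum : Summable (p i))
    (hdom : ∀ k, tailOf p i k ≤ T k) (hT : Summable T) (m : ℕ) :
    Summable fun j : ℕ => j * p i (m + j) :=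
  summable_of_sum_range_le (fun j => mul_nonneg j.cast_nonneg (hpos _))
    (sum_range_mul_le_tsum_of_tailOf_le hpos hsum hdom hT m)

lemma tsum_mul_le_of_tailOf_le (hpos : ∀ n, 0 ≤ p i n) (hsum : Summable (p i))
    (hdom : ∀ k, tailOf p i k ≤ T k) (hT : Summable T) (m : ℕ) :
    ∑' j : ℕ, j * p i (m + j) ≤ ∑' j, T (j + (m + 1)) :=
  Real.tsum_le_of_sum_range_le (fun j => mul_nonneg j.cast_nonneg (hpos _))
    (sum_range_mul_le_tsum_of_tailOf_le hpos hsum hdom hT m)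

lemma tsum_phi_le_entropyBound (hpos : ∀ n, 0 ≤ p i n) (hsum : Summable (p i))
    (hdom : ∀ k, tailOf p i k ≤ T k) (hT : Summable T) (m : ℕ) {a : ℝ} (ha : 0 ≤ a) :
    ∑' n, phi (p i (m + n)) ≤ entropyBound T a m := by
  have hmass : ∑' n, p i (m + n) ≤ T m := hdom m
  have hmean := tsum_mul_le_of_tailOf_le hpos hsum hdom hT m
  refine (tsum_phi_le (fun _ => hpos _) (summable_nat_add_left hsum m)
    (summable_mul_of_tailOf_le hpos hsum hdom hT m) a).trans ?_
  rw [entropyBound]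
  gcongr

lemma exists_entropyBound_lt (hT : Summable T) {ε : ℝ} (hε : 0 < ε) :
    ∃ a : ℝ, 0 ≤ a ∧ ∃ m : ℕ, entropyBound T a m < ε := by
  have hlog : 0 < ε * Real.log 2 := mul_pos hε (Real.log_pos one_lt_two)
  have hexp : Tendsto (fun a => Real.exp (-a) * ∑' n : ℕ, Real.exp (-n)) atTop (nhds 0) := by
    simpa using Real.tendsto_exp_neg_atTop_nhds_zero.mul_const (∑' n : ℕ, Real.exp (-n))
  obtain ⟨a, ha, ha_exp⟩ :=
    ((eventually_ge_atTop 0).and (hexp.eventually_lt_const hlog)).exists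
  have htails : Tendsto (fun m => a * T m + ∑' j, T (j + (m + 1))) atTop (nhds 0) := by
    simpa using (hT.tendsto_atTop_zero.const_mul a).add
      ((tendsto_sum_nat_add T).comp (tendsto_add_atTop_nat 1))
  obtain ⟨m, hm⟩ := (htails.eventually_lt_const (sub_pos.2 ha_exp)).exists
  exact ⟨a, ha, m, (div_lt_iff₀ (Real.log_pos one_lt_two)).2 (lt_sub_iff_add_lt.1 hm)⟩

theorem unif_summable_entropy_of_domination_general (hpos : ∀ i n, 0 ≤ p i n)
    (hsum : ∀ i, Summable (p i)) (hdom : ∀ i k, tailOf p i k ≤ T k) (hT : Summable T)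
    (ε : ℝ) (hε : 0 < ε) :
    ∃ m : ℕ, ∀ i : I, (Summable fun n : ℕ => phi (p i (m + n))) ∧
      ∑' n : ℕ, phi (p i (m + n)) < ε := by
  obtain ⟨a, ha, m, hm⟩ := exists_entropyBound_lt hT hε
  refine ⟨m, fun i => ⟨?_, ?_⟩⟩
  · exact summable_phi_of_summable_mul (fun _ => hpos i _) (summable_nat_add_left (hsum i) m)
      (summable_mul_of_tailOf_le (hpos i) (hsum i) (hdom i) hT m)
  · exact (tsum_phi_le_entropyBound (hpos i) (hsum i) (hdom i) hT m ha).trans_lt hm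

end Domination

/-- Stochastic domination with finite mean implies uniform summability of the entropies:
if the tails `τ_i(k)` are uniformly small and the dominating distribution
`p(n) = τ(n) − τ(n+1)` has finite mean, then for every `ε > 0` there is `m` such that
`∑_{n ≥ m} φ(p_i(n)) < ε` for every `i`. -/
theorem unif_summable_entropy_of_domination
    {I : Type*} [Nonempty I] (p : I → ℕ → ℝ)
    (hpos : ∀ i n, 0 ≤ p i n) (hzero : ∀ i, p i 0 = 0)
    (hprob : ∀ i, HasSum (p i) 1)
    (htail : Tendsto (fun k => tailSup p k) atTop (nhds 0))
    (hmean : Summable fun n : ℕ => (n : ℝ) * (tailSup p n - tailSup p (n + 1))) :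
    ∀ ε : ℝ, 0 < ε → ∃ m : ℕ, ∀ i : I,
      (Summable fun n : ℕ => phi (p i (m + n))) ∧
      (∑' n : ℕ, phi (p i (m + n))) < ε := by
  have hsum (i : I) : Summable (p i) := (hprob i).summable
  have hmass : BddAbove (Set.range fun i => tailOf p i 0) :=
    ⟨1, Set.forall_mem_range.2 fun i => by simp [tailOf, (hprob i).tsum_eq]⟩
  exact unif_summable_entropy_of_domination_general hpos hsum (tailOf_le_tailSup hpos hsum hmass)
    (summable_of_summable_mul_sub_succ (antitone_tailSup hpos hsum hmass) htail hmean)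
end
end

section
/- Indispensability of the variational-distance term: Let d₁, d₂ ≥ 2 be integers and θ ∈ (0,1). For n ≥ 1, on X_n = Fin(d₁^n) ⊕ Fin(d₂^n) let P_n give mass θ/d₁^n to each element of the first summand and (1−θ)/d₂^n to each of the second, and let Q_n be the analogous distribution with parameter 1/2. Then, as n → ∞, D(P_n‖Q_n)/n → 0, while |H(P_n)/n − H(Q_n)/n| → |θ − 1/2|·|log₂ d₁ − log₂ d₂|; in particular, if θ ≠ 1/2 and d₁ ≠ d₂ the latter limit is nonzero. -/
/-!
Spreading mass `t` evenly over `N` points contributes `φ(t) + t·log₂ N` to the entropy, and two such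
spreads over the same points contribute to the divergence exactly what the unspread masses `s`, `t`
do, namely `s·log₂(s/t)`. So `D(P_n‖Q_n)` does not depend on `n`, while `H(P_n)` is affine in `n`
with slope `θ·log₂ d₁ + (1-θ)·log₂ d₂`, its entropy rate.
-/

open Filter

noncomputable section

/-- The two-branch distribution on `Fin (d₁^n) ⊕ Fin (d₂^n)`: mass `θ/d₁^n` on each element of
the first summand and `(1−θ)/d₂^n` on each element of the second. -/
def twoBranch (d₁ d₂ n : ℕ) (θ : ℝ) : Fin (d₁ ^ n) ⊕ Fin (d₂ ^ n) → ℝ :=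
  Sum.elim (fun _ => θ / (d₁ : ℝ) ^ n) (fun _ => (1 - θ) / (d₂ : ℝ) ^ n)

/-- The entropy `H(ν) = ∑_{x∈X} φ(ν(x))` of a distribution on a finite set. -/
def entOf {X : Type*} [Fintype X] (ν : X → ℝ) : ℝ := ∑ x : X, phi (ν x)

/-- The Kullback–Leibler divergence `D(ν₁‖ν₂) = ∑_{x∈X} ν₁(x)·log₂(ν₁(x)/ν₂(x))`. -/
def klOf {X : Type*} [Fintype X] (ν₁ ν₂ : X → ℝ) : ℝ :=
  ∑ x : X, ν₁ x * Real.logb 2 (ν₁ x / ν₂ x)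

section Sum

variable {X Y : Type*} [Fintype X] [Fintype Y]

lemma entOf_sumElim (μ : X → ℝ) (ν : Y → ℝ) :
    entOf (Sum.elim μ ν) = entOf μ + entOf ν :=
  Fintype.sum_sum_type _

lemma klOf_sumElim (μ₁ μ₂ : X → ℝ) (ν₁ ν₂ : Y → ℝ) :
    klOf (Sum.elim μ₁ ν₁) (Sum.elim μ₂ ν₂) = klOf μ₁ μ₂ + klOf ν₁ ν₂ :=
  Fintype.sum_sum_type _

end Sum

section Uniform

lemma phi_div (t : ℝ) {c : ℝ} (hc : c ≠ 0) :
    phi (t / c) = (phi t + t * Real.logb 2 c) / c := by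
  obtain rfl | ht := eq_or_ne t 0
  · simp [phi]
  · rw [phi, phi, one_div_div, Real.logb_div hc ht, one_div, Real.logb_inv]
    ring

variable (X : Type*) [Fintype X] [Nonempty X]

lemma entOf_const_div_card (t : ℝ) :
    entOf (fun _ : X => t / Fintype.card X) = phi t + t * Real.logb 2 (Fintype.card X) := by
  have hX : (Fintype.card X : ℝ) ≠ 0 := Nat.cast_ne_zero.2 Fintype.card_ne_zero
  rw [entOf, Finset.sum_const, Finset.card_univ, nsmul_eq_mul, phi_div t hX, mul_div_cancel₀ _ hX]

lemma klOf_const_div_card (s t : ℝ) :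
    klOf (fun _ : X => s / Fintype.card X) (fun _ => t / Fintype.card X) =
      s * Real.logb 2 (s / t) := by
  have hX : (Fintype.card X : ℝ) ≠ 0 := Nat.cast_ne_zero.2 Fintype.card_ne_zero
  rw [klOf, Finset.sum_const, Finset.card_univ, nsmul_eq_mul, div_div_div_cancel_right₀ hX,
    ← mul_assoc, mul_div_cancel₀ _ hX]

end Uniform

section TwoBranch

lemma twoBranch_eq_sumElim_div_card (d₁ d₂ n : ℕ) (θ : ℝ) :
    twoBranch d₁ d₂ n θ =
      Sum.elim (fun _ => θ / Fintype.card (Fin (d₁ ^ n)))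
        (fun _ => (1 - θ) / Fintype.card (Fin (d₂ ^ n))) := by
  simp only [twoBranch, Fintype.card_fin, Nat.cast_pow]

variable (d₁ d₂ : ℕ) [NeZero d₁] [NeZero d₂]

lemma entOf_twoBranch (n : ℕ) (θ : ℝ) :
    entOf (twoBranch d₁ d₂ n θ) =
      phi θ + phi (1 - θ) + n * (θ * Real.logb 2 d₁ + (1 - θ) * Real.logb 2 d₂) := by
  rw [twoBranch_eq_sumElim_div_card, entOf_sumElim, entOf_const_div_card, entOf_const_div_card]
  simp only [Fintype.card_fin, Nat.cast_pow, Real.logb_pow]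
  ring

lemma klOf_twoBranch (n : ℕ) (θ η : ℝ) :
    klOf (twoBranch d₁ d₂ n θ) (twoBranch d₁ d₂ n η) =
      θ * Real.logb 2 (θ / η) + (1 - θ) * Real.logb 2 ((1 - θ) / (1 - η)) := by
  rw [twoBranch_eq_sumElim_div_card, twoBranch_eq_sumElim_div_card, klOf_sumElim,
    klOf_const_div_card, klOf_const_div_card]

lemma tendsto_entOf_twoBranch_div (θ : ℝ) :
    Tendsto (fun n : ℕ => entOf (twoBranch d₁ d₂ n θ) / n) atTop
      (nhds (θ * Real.logb 2 d₁ + (1 - θ) * Real.logb 2 d₂)) := by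
  have h := (tendsto_const_div_atTop_nhds_zero_nat (phi θ + phi (1 - θ))).add_const
    (θ * Real.logb 2 d₁ + (1 - θ) * Real.logb 2 d₂)
  rw [zero_add] at h
  refine h.congr' ?_
  filter_upwards [eventually_ne_atTop 0] with n hn
  rw [entOf_twoBranch, add_div _ (_ * _), mul_div_cancel_left₀ _ (Nat.cast_ne_zero.2 hn)]

lemma tendsto_klOf_twoBranch_div (θ η : ℝ) :
    Tendsto (fun n : ℕ => klOf (twoBranch d₁ d₂ n θ) (twoBranch d₁ d₂ n η) / n) atTop
      (nhds 0) := by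
  simp only [klOf_twoBranch]
  exact tendsto_const_div_atTop_nhds_zero_nat _

lemma tendsto_abs_entOf_twoBranch_div_sub (θ η : ℝ) :
    Tendsto (fun n : ℕ =>
        |entOf (twoBranch d₁ d₂ n θ) / n - entOf (twoBranch d₁ d₂ n η) / n|)
      atTop (nhds (|θ - η| * |Real.logb 2 d₁ - Real.logb 2 d₂|)) := by
  have rate_sub : (θ - η) * (Real.logb 2 d₁ - Real.logb 2 d₂) =
      θ * Real.logb 2 d₁ + (1 - θ) * Real.logb 2 d₂ -
        (η * Real.logb 2 d₁ + (1 - η) * Real.logb 2 d₂) := by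
    ring
  rw [← abs_mul, rate_sub]
  exact ((tendsto_entOf_twoBranch_div d₁ d₂ θ).sub (tendsto_entOf_twoBranch_div d₁ d₂ η)).abs

end TwoBranch

/-- Indispensability of the variational-distance term: as `n → ∞`,
`D(P_n‖Q_n)/n → 0` while `|H(P_n)/n − H(Q_n)/n| → |θ − 1/2|·|log₂ d₁ − log₂ d₂|`,
which is nonzero when `θ ≠ 1/2` and `d₁ ≠ d₂`. -/
theorem variational_term_indispensable (d₁ d₂ : ℕ) (hd₁ : 2 ≤ d₁) (hd₂ : 2 ≤ d₂)
    (θ : ℝ) (hθ0 : 0 < θ) (hθ1 : θ < 1) :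
    Tendsto (fun n : ℕ =>
        klOf (twoBranch d₁ d₂ n θ) (twoBranch d₁ d₂ n (1/2)) / n) atTop (nhds 0) ∧
    Tendsto (fun n : ℕ =>
        |entOf (twoBranch d₁ d₂ n θ) / n - entOf (twoBranch d₁ d₂ n (1/2)) / n|)
      atTop (nhds (|θ - 1/2| * |Real.logb 2 d₁ - Real.logb 2 d₂|)) ∧
    (θ ≠ 1/2 → d₁ ≠ d₂ → |θ - 1/2| * |Real.logb 2 d₁ - Real.logb 2 d₂| ≠ 0) := by
  have : NeZero d₁ := ⟨by lia⟩
  have : NeZero d₂ := ⟨by lia⟩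
  refine ⟨tendsto_klOf_twoBranch_div d₁ d₂ θ (1/2),
    tendsto_abs_entOf_twoBranch_div_sub d₁ d₂ θ (1/2), fun hθ hd => ?_⟩
  have hlog : Real.logb 2 d₁ ≠ Real.logb 2 d₂ :=
    (Real.logb_injOn_pos one_lt_two).ne (Set.mem_Ioi.2 (by positivity))
      (Set.mem_Ioi.2 (by positivity)) (Nat.cast_injective.ne hd)
  exact mul_ne_zero (abs_ne_zero.2 (sub_ne_zero.2 hθ)) (abs_ne_zero.2 (sub_ne_zero.2 hlog))
end
end

section
/- Monotonicity of relative entropy along sections: Let T be a rooted tree (a prefix-closed set of finite lists over ℕ containing the empty list) with no vertex having exactly one successor, and let P and Q be strictly positive unit flows on T. For n ≥ 1 let S(n) = {x ∈ T : |x| = n} ∪ {leaves v of T with |v| < n}, and suppose for each n the series D(P_n‖Q_n) = ∑_{x ∈ S(n)} B_P(x)·log₂(B_P(x)/B_Q(x)) is absolutely convergent. Then n ↦ D(P_n‖Q_n) is monotone nondecreasing. -/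
open scoped BigOperators
open Filter

noncomputable section

/-- A strictly positive unit flow on `T`: positive on `T`, value `1` at the root, and
flow conservation at every non-leaf vertex. It encodes a Borel probability measure on the
boundary (ends and leaves) of `T`. -/
def IsUnitFlow (T : Set (List ℕ)) (B : List ℕ → ℝ) : Prop :=
  (∀ x ∈ T, 0 < B x) ∧ B ([] : List ℕ) = 1 ∧
  ∀ x ∈ T, ¬ IsLeaf T x → HasSum (fun y : succs T x => B y) (B x)

/-- The section `S(n) = {x ∈ T : |x| = n} ∪ {leaves v : |v| < n}`. -/
def secn (T : Set (List ℕ)) (n : ℕ) : Set (List ℕ) :=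
  {x | (x ∈ T ∧ x.length = n) ∨ (IsLeaf T x ∧ x.length < n)}

/-!
Replacing each vertex of `S(n + 1)` by its prefix of length at most `n` is a map `S(n + 1) → S(n)`,
and flow conservation says precisely that it pushes `P_{n+1}` forward to `P_n` and `Q_{n+1}` to
`Q_n`. The claim is therefore the data processing inequality for the Kullback-Leibler divergence,
which on a countable discrete space is the series `D(P_n‖Q_n)` up to the factor `log 2`.
-/

open MeasureTheory InformationTheory
open scoped ENNReal

theorem absolutelyContinuous_toMeasure_of_support_subset {α : Type*} [MeasurableSpace α]
    {p q : PMF α} (h : p.support ⊆ q.support) : p.toMeasure ≪ q.toMeasure := by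
  refine .mk fun s hs hq ↦ ?_
  rw [PMF.toMeasure_apply_eq_zero_iff _ hs] at hq ⊢
  exact hq.mono_left h

section DiscreteKLDiv

variable {α : Type*} [MeasurableSpace α] [MeasurableSingletonClass α] {μ ν : Measure α}

theorem measureReal_singleton_mul_llr [μ.HaveLebesgueDecomposition ν] (hμν : μ ≪ ν) (x : α) :
    μ.real {x} * llr μ ν x = μ.real {x} * Real.log (μ.real {x} / ν.real {x}) := by
  have hdensity : (μ.rnDeriv ν x).toReal * ν.real {x} = μ.real {x} := by
    have h := Measure.setLIntegral_rnDeriv' hμν (measurableSet_singleton x)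
    rw [lintegral_singleton] at h
    simp only [measureReal_def, ← h, ENNReal.toReal_mul]
  obtain hν | hν := eq_or_ne (ν.real {x}) 0
  · have hμ : μ.real {x} = 0 := by rw [← hdensity, hν, mul_zero]
    simp only [hμ, zero_mul]
  · rw [llr, ← hdensity, mul_div_cancel_right₀ _ hν]

variable [Countable α] [IsFiniteMeasure μ]

theorem klDiv_ne_top_iff_summable [μ.HaveLebesgueDecomposition ν] (hμν : μ ≪ ν) :
    klDiv μ ν ≠ ∞ ↔ Summable fun x ↦ μ.real {x} * Real.log (μ.real {x} / ν.real {x}) := by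
  have hint : Integrable (llr μ ν) μ ↔ Summable fun x ↦ μ.real {x} * ‖llr μ ν x‖ := by
    have h := integrable_sum_dirac_iff (f := llr μ ν) (x := id) fun x ↦ measure_ne_top μ {x}
    simpa only [id, Measure.sum_smul_dirac] using! h
  simp_rw [klDiv_ne_top_iff, and_iff_right hμν, hint, ← measureReal_singleton_mul_llr hμν]
  rw [← summable_norm_iff (f := fun x ↦ μ.real {x} * llr μ ν x)]
  simp_rw [norm_mul, Real.norm_of_nonneg measureReal_nonneg]

theorem toReal_klDiv_eq_tsum [IsFiniteMeasure ν] (hμν : μ ≪ ν) (huniv : μ Set.univ = ν Set.univ) :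
    (klDiv μ ν).toReal = ∑' x, μ.real {x} * Real.log (μ.real {x} / ν.real {x}) := by
  have hint : ∫ x, llr μ ν x ∂μ = ∑' x, μ.real {x} * llr μ ν x := by
    have h := integral_sum_dirac (f := llr μ ν) (x := id) fun x ↦ measure_ne_top μ {x}
    simpa only [id, Measure.sum_smul_dirac] using! h
  simp_rw [toReal_klDiv_of_measure_eq hμν huniv, hint, measureReal_singleton_mul_llr hμν]

end DiscreteKLDiv

section Truncation

variable {T : Set (List ℕ)} {B : List ℕ → ℝ} {n : ℕ}

theorem secn_subset : secn T n ⊆ T := by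
  rintro x (⟨hx, -⟩ | ⟨⟨hx, -⟩, -⟩) <;> exact hx

theorem length_le_of_mem_secn {x : List ℕ} (hx : x ∈ secn T n) : x.length ≤ n :=
  hx.elim (fun h ↦ h.2.le) fun h ↦ h.2.le

theorem mem_succs_take {y : List ℕ} (hyT : y ∈ T) (hy : y.length = n + 1) :
    y ∈ succs T (y.take n) :=
  ⟨hyT, y[n], by rw [List.take_append_getElem, List.take_of_length_le hy.le]⟩

theorem IsTree.secn_zero (hT : IsTree T) : secn T 0 = {[]} := by
  ext x
  constructor
  · rintro (⟨-, hx⟩ | ⟨-, hx⟩)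
    · exact List.length_eq_zero_iff.1 hx
    · exact absurd hx (Nat.not_lt_zero _)
  · rintro rfl
    exact .inl ⟨hT.1, rfl⟩

theorem IsTree.take_mem_secn (hT : IsTree T) {y : List ℕ} (hy : y ∈ secn T (n + 1)) :
    y.take n ∈ secn T n := by
  have htake : y.take n ∈ T := hT.2 y (secn_subset hy) _ (List.take_prefix n y)
  obtain hn | hn := le_or_gt n y.length
  · exact .inl ⟨htake, List.length_take_of_le hn⟩
  · rw [List.take_of_length_le hn.le]
    obtain ⟨-, hlen⟩ | ⟨hleaf, -⟩ := hy
    · omega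
    · exact .inr ⟨hleaf, hn⟩

/-- The map `S(n + 1) → S(n)` sending a vertex of length `n + 1` to its parent and fixing the
leaves of length at most `n`. -/
def IsTree.truncate (hT : IsTree T) (n : ℕ) (y : secn T (n + 1)) : secn T n :=
  ⟨(y : List ℕ).take n, hT.take_mem_secn y.2⟩

theorem IsTree.mem_image_truncate_fiber (hT : IsTree T) {x : secn T n} {y : List ℕ} :
    y ∈ Subtype.val '' (hT.truncate n ⁻¹' {x}) ↔ y ∈ secn T (n + 1) ∧ y.take n = x := by
  simp [IsTree.truncate, Subtype.ext_iff, and_comm]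

theorem IsTree.image_truncate_fiber_of_isLeaf (hT : IsTree T) {x : secn T n} (hx : IsLeaf T x) :
    Subtype.val '' (hT.truncate n ⁻¹' {x}) = {x.1} := by
  have hxn : x.1.length ≤ n := length_le_of_mem_secn x.2
  ext y
  rw [hT.mem_image_truncate_fiber, Set.mem_singleton_iff]
  constructor
  · rintro ⟨⟨hyT, hy⟩ | ⟨-, hy⟩, hyx⟩
    · have hsucc : y ∈ succs T x := hyx ▸ mem_succs_take hyT hy
      exact absurd hsucc (hx.2 ▸ Set.notMem_empty y)
    · rwa [List.take_of_length_le (Nat.lt_succ_iff.1 hy)] at hyx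
  · rintro rfl
    exact ⟨.inr ⟨hx, Nat.lt_succ_iff.2 hxn⟩, List.take_of_length_le hxn⟩

theorem IsTree.image_truncate_fiber_of_not_isLeaf (hT : IsTree T) {x : secn T n}
    (hx : ¬IsLeaf T x) : Subtype.val '' (hT.truncate n ⁻¹' {x}) = succs T x := by
  have hxn : x.1.length = n := x.2.elim And.right fun h ↦ absurd h.1 hx
  ext y
  rw [hT.mem_image_truncate_fiber]
  constructor
  · rintro ⟨⟨hyT, hy⟩ | ⟨hyleaf, hy⟩, hyx⟩
    · exact hyx ▸ mem_succs_take hyT hy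
    · rw [List.take_of_length_le (Nat.lt_succ_iff.1 hy)] at hyx
      exact absurd (hyx ▸ hyleaf) hx
  · rintro ⟨hyT, k, rfl⟩
    exact ⟨.inl ⟨hyT, by rw [List.length_append, hxn, List.length_singleton]⟩,
      List.take_left' hxn⟩

theorem IsUnitFlow.hasSum_truncate_fiber (hT : IsTree T) (hB : IsUnitFlow T B) (x : secn T n) :
    HasSum (fun y : hT.truncate n ⁻¹' {x} ↦ B y) (B x) := by
  have himage : HasSum (fun y : Subtype.val '' (hT.truncate n ⁻¹' {x}) ↦ B y) (B x) := by
    by_cases hx : IsLeaf T x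
    · rw [hT.image_truncate_fiber_of_isLeaf hx]
      exact hasSum_unique (fun y : ({x.1} : Set (List ℕ)) ↦ B y)
    · rw [hT.image_truncate_fiber_of_not_isLeaf hx]
      exact hB.2.2 x (secn_subset x.2) hx
  exact (Equiv.Set.image _ (hT.truncate n ⁻¹' {x}) Subtype.val_injective).hasSum_iff.2 himage

theorem IsUnitFlow.tsum_ofReal_truncate_fiber (hT : IsTree T) (hB : IsUnitFlow T B)
    (x : secn T n) :
    ∑' y : hT.truncate n ⁻¹' {x}, ENNReal.ofReal (B y) = ENNReal.ofReal (B x) := by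
  have hsum := hB.hasSum_truncate_fiber hT x
  rw [← hsum.tsum_eq, ENNReal.ofReal_tsum_of_nonneg _ hsum.summable]
  exact fun y ↦ (hB.1 y (secn_subset y.1.2)).le

theorem IsUnitFlow.tsum_ofReal_secn (hT : IsTree T) (hB : IsUnitFlow T B) (n : ℕ) :
    ∑' x : secn T n, ENNReal.ofReal (B x) = 1 := by
  induction n with
  | zero =>
    rw [hT.secn_zero, tsum_singleton [] fun x ↦ ENNReal.ofReal (B x), hB.2.1, ENNReal.ofReal_one]
  | succ n ih =>
    calc ∑' y : secn T (n + 1), ENNReal.ofReal (B y)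
        = ∑' x, ∑' y : hT.truncate n ⁻¹' {x}, ENNReal.ofReal (B y) :=
          (ENNReal.tsum_fiberwise _ (hT.truncate n)).symm
      _ = ∑' x : secn T n, ENNReal.ofReal (B x) := tsum_congr (hB.tsum_ofReal_truncate_fiber hT)
      _ = 1 := ih

/-- The distribution `P_n` induced on the section `S(n)` by a unit flow, as a probability mass
function on the subtype `secn T n`. -/
def IsUnitFlow.secnPMF (hT : IsTree T) (hB : IsUnitFlow T B) (n : ℕ) : PMF (secn T n) :=
  ⟨fun x ↦ ENNReal.ofReal (B x), hB.tsum_ofReal_secn hT n ▸ ENNReal.summable.hasSum⟩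

theorem IsUnitFlow.support_secnPMF (hT : IsTree T) (hB : IsUnitFlow T B) (n : ℕ) :
    (hB.secnPMF hT n).support = Set.univ :=
  Set.eq_univ_of_forall fun x ↦
    (PMF.mem_support_iff _ x).2 (ENNReal.ofReal_pos.2 (hB.1 x (secn_subset x.2))).ne'

end Truncation

section RelativeEntropy

local instance : MeasurableSpace (List ℕ) := ⊤

local instance : DiscreteMeasurableSpace (List ℕ) := ⟨fun _ ↦ trivial⟩

variable {T : Set (List ℕ)} {B BP BQ : List ℕ → ℝ} {n : ℕ}

theorem IsUnitFlow.toMeasure_secnPMF_singleton (hT : IsTree T) (hB : IsUnitFlow T B)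
    (x : secn T n) : (hB.secnPMF hT n).toMeasure {x} = ENNReal.ofReal (B x) :=
  PMF.toMeasure_apply_singleton _ x (measurableSet_singleton x)

theorem IsUnitFlow.toMeasure_secnPMF_real_singleton (hT : IsTree T) (hB : IsUnitFlow T B)
    (x : secn T n) : (hB.secnPMF hT n).toMeasure.real {x} = B x := by
  rw [measureReal_def, hB.toMeasure_secnPMF_singleton,
    ENNReal.toReal_ofReal (hB.1 x (secn_subset x.2)).le]

theorem IsUnitFlow.map_truncate_toMeasure_secnPMF (hT : IsTree T) (hB : IsUnitFlow T B) (n : ℕ) :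
    (hB.secnPMF hT (n + 1)).toMeasure.map (hT.truncate n) = (hB.secnPMF hT n).toMeasure := by
  refine Measure.ext_of_singleton fun x ↦ ?_
  rw [Measure.map_apply .of_discrete (.singleton x), hB.toMeasure_secnPMF_singleton,
    PMF.toMeasure_apply_eq_tsum, ← tsum_subtype]
  exact hB.tsum_ofReal_truncate_fiber hT x

theorem IsUnitFlow.absolutelyContinuous_secnPMF (hT : IsTree T) (hBP : IsUnitFlow T BP)
    (hBQ : IsUnitFlow T BQ) (n : ℕ) :
    (hBP.secnPMF hT n).toMeasure ≪ (hBQ.secnPMF hT n).toMeasure := by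
  refine absolutelyContinuous_toMeasure_of_support_subset ?_
  rw [hBP.support_secnPMF, hBQ.support_secnPMF]

theorem monotone_klDiv_secnPMF (hT : IsTree T) (hBP : IsUnitFlow T BP) (hBQ : IsUnitFlow T BQ) :
    Monotone fun n ↦ klDiv (hBP.secnPMF hT n).toMeasure (hBQ.secnPMF hT n).toMeasure := by
  refine monotone_nat_of_le_succ fun n ↦ ?_
  rw [← hBP.map_truncate_toMeasure_secnPMF hT, ← hBQ.map_truncate_toMeasure_secnPMF hT]
  exact klDiv_map_le _ _ .of_discrete

theorem klDiv_secnPMF_ne_top_iff {b : ℝ} (hb : 1 < b) (hT : IsTree T) (hBP : IsUnitFlow T BP)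
    (hBQ : IsUnitFlow T BQ) :
    klDiv (hBP.secnPMF hT n).toMeasure (hBQ.secnPMF hT n).toMeasure ≠ ∞ ↔
      Summable fun x : secn T n ↦ BP x * Real.logb b (BP x / BQ x) := by
  simp_rw [klDiv_ne_top_iff_summable (hBP.absolutelyContinuous_secnPMF hT hBQ n),
    IsUnitFlow.toMeasure_secnPMF_real_singleton, Real.logb, ← mul_div_assoc,
    summable_div_const_iff (Real.log_pos hb).ne']

theorem tsum_mul_logb_div_eq_toReal_klDiv_secnPMF (b : ℝ) (hT : IsTree T) (hBP : IsUnitFlow T BP)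
    (hBQ : IsUnitFlow T BQ) :
    ∑' x : secn T n, BP x * Real.logb b (BP x / BQ x) =
      (klDiv (hBP.secnPMF hT n).toMeasure (hBQ.secnPMF hT n).toMeasure).toReal / Real.log b := by
  have huniv : (hBP.secnPMF hT n).toMeasure Set.univ = (hBQ.secnPMF hT n).toMeasure Set.univ := by
    rw [measure_univ, measure_univ]
  simp_rw [toReal_klDiv_eq_tsum (hBP.absolutelyContinuous_secnPMF hT hBQ n) huniv,
    IsUnitFlow.toMeasure_secnPMF_real_singleton, Real.logb, ← mul_div_assoc, tsum_div_const]

end RelativeEntropy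

theorem kl_monotone_along_sections_general {b : ℝ} (hb : 1 < b) {T : Set (List ℕ)} (hT : IsTree T)
    {BP BQ : List ℕ → ℝ} (hBP : IsUnitFlow T BP) (hBQ : IsUnitFlow T BQ) {m n : ℕ} (hmn : m ≤ n)
    (hn : Summable fun x : secn T n ↦ BP x * Real.logb b (BP x / BQ x)) :
    (Summable fun x : secn T m ↦ BP x * Real.logb b (BP x / BQ x)) ∧
      ∑' x : secn T m, BP x * Real.logb b (BP x / BQ x) ≤
        ∑' x : secn T n, BP x * Real.logb b (BP x / BQ x) := by
  have hle := monotone_klDiv_secnPMF hT hBP hBQ hmn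
  have hn_ne_top := (klDiv_secnPMF_ne_top_iff hb hT hBP hBQ).2 hn
  refine ⟨(klDiv_secnPMF_ne_top_iff hb hT hBP hBQ).1 (ne_top_of_le_ne_top hn_ne_top hle), ?_⟩
  simp only [tsum_mul_logb_div_eq_toReal_klDiv_secnPMF b hT hBP hBQ]
  exact div_le_div_of_nonneg_right (ENNReal.toReal_mono hn_ne_top hle) (Real.log_pos hb).le

/-- Monotonicity of relative entropy along sections: `n ↦ D(P_n‖Q_n)` is nondecreasing. -/
theorem kl_monotone_along_sections
    (T : Set (List ℕ)) (hT : IsTree T) (hU : NoUnary T)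
    (BP BQ : List ℕ → ℝ) (hBP : IsUnitFlow T BP) (hBQ : IsUnitFlow T BQ)
    (habs : ∀ n : ℕ, 1 ≤ n →
      Summable fun x : secn T n => |BP x * Real.logb 2 (BP x / BQ x)|) :
    ∀ m n : ℕ, 1 ≤ m → m ≤ n →
      (∑' x : secn T m, BP x * Real.logb 2 (BP x / BQ x))
        ≤ ∑' x : secn T n, BP x * Real.logb 2 (BP x / BQ x) := by
  intro m n hm hmn
  exact (kl_monotone_along_sections_general one_lt_two hT hBP hBQ hmn
    (habs n (hm.trans hmn)).of_abs).2
end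
end
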